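/- For every dimension d ≥ 1, every degree k ∈ ℕ, every ρ > 0, and all exponents p, q ∈ [1, +∞) with p ≤ q and 1/q ≥ 1/p − 1/d, there exists a constant C > 0 depending only on d, ρ, k, q and p such that: for every open bounded set T ⊆ ℝ^d with diameter h_T which is star-shaped with respect to a ball of radius ρ·h_T, and every polynomial w : ℝ^d → ℝ of total degree at most k satisfying ∫_T w(x) dx = 0, one has ‖w‖_{L^q(T)} ≤ C · h_T^{1 + d/q − d/p} · ‖∇w‖_{L^p(T; ℝ^d)}. -/

import Mathlib

open MeasureTheory Metric Set
open scoped ENNReal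

noncomputable section

/-- `w : ℝ^d → ℝ` is (given by) a multivariate polynomial of total degree at most `k`. -/
def IsPolyDegLE (d k : ℕ) (w : EuclideanSpace ℝ (Fin d) → ℝ) : Prop :=
  ∃ P : MvPolynomial (Fin d) ℝ, P.totalDegree ≤ k ∧ ∀ x, w x = MvPolynomial.eval (fun i => x i) P

/-- `T` is star-shaped with respect to a ball of radius `ρ * diam T`. -/
def StarShapedWrtBall {d : ℕ} (ρ : ℝ) (T : Set (EuclideanSpace ℝ (Fin d))) : Prop :=
  ∃ c, Metric.ball c (ρ * Metric.diam T) ⊆ T ∧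
    ∀ x ∈ Metric.ball c (ρ * Metric.diam T), ∀ y ∈ T, segment ℝ x y ⊆ T

/-!
A function with zero mean on `T` is bounded there by twice its oscillation around the centre `c`,
and since `T` lies between the balls of radii `ρ * h` and `h` about `c`, it suffices to bound the
oscillation on the large ball by `‖Dw‖_{L^p}` on the small one. An affine change of variables
preserves polynomials of degree at most `k` and reduces this to `h = 1`. There it is a
comparison on a finite-dimensional space: if `Dw` vanishes on a ball, then `w` is constant by
analyticity, so the kernel of `w ↦ Dw` is contained in that of `w ↦ w - w c`. The power of `h` comes
from rescaling the norms.
-/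

open scoped NNReal

section LinearAlgebra

variable {𝕜 V F G : Type*} [NontriviallyNormedField 𝕜] [CompleteSpace 𝕜]
  [AddCommGroup V] [Module 𝕜 V] [FiniteDimensional 𝕜 V]
  [NormedAddCommGroup F] [NormedSpace 𝕜 F] [SeminormedAddCommGroup G] [NormedSpace 𝕜 G]

theorem exists_enorm_le_mul_enorm_of_ker_le (L : V →ₗ[𝕜] F) (A : V →ₗ[𝕜] G)
    (h : LinearMap.ker L ≤ LinearMap.ker A) :
    ∃ C : ℝ≥0, ∀ v, ‖A v‖ₑ ≤ C * ‖L v‖ₑ := by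
  obtain ⟨s, hs⟩ := L.rangeRestrict.exists_rightInverse_of_surjective L.range_rangeRestrict
  have factorization (v : V) : A v = A (s (L.rangeRestrict v)) := by
    have hker : v - s (L.rangeRestrict v) ∈ LinearMap.ker L := by
      rw [← L.ker_rangeRestrict, LinearMap.mem_ker, map_sub, ← LinearMap.comp_apply, hs,
        LinearMap.id_apply, sub_self]
    rw [← sub_eq_zero, ← map_sub]
    exact h hker
  let H := LinearMap.toContinuousLinearMap (A ∘ₗ s)
  refine ⟨‖H‖₊, fun v => ?_⟩
  rw [factorization v]
  exact H.le_opENorm (L.rangeRestrict v)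

end LinearAlgebra

section Measure

theorem memLp_restrict_of_continuous_of_isBounded {X F : Type*} [PseudoMetricSpace X]
    [ProperSpace X] [MeasurableSpace X] [OpensMeasurableSpace X] {μ : Measure X}
    [IsFiniteMeasureOnCompacts μ] [NormedAddCommGroup F] {f : X → F} (hf : Continuous f)
    {s : Set X} (hs : Bornology.IsBounded s) (p : ℝ≥0∞) : MemLp f p (μ.restrict s) := by
  have hK : IsCompact (closure s) := hs.isCompact_closure
  have : IsFiniteMeasure (μ.restrict (closure s)) := ⟨by simpa using hK.measure_lt_top⟩
  obtain ⟨M, hM⟩ := hK.exists_bound_of_continuousOn hf.continuousOn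
  refine (MemLp.of_bound hf.aestronglyMeasurable M ?_).mono_measure
    (Measure.restrict_mono subset_closure le_rfl)
  exact ae_restrict_of_forall_mem isClosed_closure.measurableSet hM

variable {α F : Type*} [MeasurableSpace α] {ν : Measure α} [IsFiniteMeasure ν]
  [NormedAddCommGroup F] [NormedSpace ℝ F] [CompleteSpace F] {f : α → F} {a : F} {M : ℝ≥0∞}

theorem enorm_le_of_integral_eq_zero [NeZero ν] (hf : Integrable f ν) (hf₀ : ∫ x, f x ∂ν = 0)
    (hM : ∀ᵐ x ∂ν, ‖f x - a‖ₑ ≤ M) : ‖a‖ₑ ≤ M := by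
  have hmass : ν univ ≠ 0 := NeZero.ne _
  refine (ENNReal.mul_le_mul_iff_left hmass (measure_ne_top ν univ)).1 ?_
  calc ‖a‖ₑ * ν univ = ‖∫ x, (f x - a) ∂ν‖ₑ := by
        rw [integral_sub hf (integrable_const a), hf₀, zero_sub, enorm_neg, integral_const,
          enorm_smul, mul_comm, Measure.real, Real.enorm_of_nonneg ENNReal.toReal_nonneg,
          ENNReal.ofReal_toReal (measure_ne_top ν univ)]
    _ ≤ ∫⁻ x, ‖f x - a‖ₑ ∂ν := enorm_integral_le_lintegral_enorm _
    _ ≤ ∫⁻ _, M ∂ν := lintegral_mono_ae hM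
    _ = M * ν univ := lintegral_const M

theorem ae_enorm_le_of_integral_eq_zero (hf : Integrable f ν) (hf₀ : ∫ x, f x ∂ν = 0)
    (hM : ∀ᵐ x ∂ν, ‖f x - a‖ₑ ≤ M) : ∀ᵐ x ∂ν, ‖f x‖ₑ ≤ 2 * M := by
  rcases eq_zero_or_neZero ν with rfl | _
  · simp
  filter_upwards [hM] with x hx
  calc ‖f x‖ₑ = ‖(f x - a) + a‖ₑ := by rw [sub_add_cancel]
    _ ≤ ‖f x - a‖ₑ + ‖a‖ₑ := enorm_add_le _ _
    _ ≤ M + M := add_le_add hx (enorm_le_of_integral_eq_zero hf hf₀ hM)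
    _ = 2 * M := (two_mul M).symm

theorem ae_restrict_enorm_le_of_setIntegral_eq_zero {X : Type*} [PseudoMetricSpace X]
    [ProperSpace X] [MeasurableSpace X] [OpensMeasurableSpace X] {μ : Measure X}
    [IsFiniteMeasureOnCompacts μ] {f : X → F} (hf : Continuous f) {T : Set X}
    (hT : Bornology.IsBounded T) (hf₀ : ∫ x in T, f x ∂μ = 0) (hM : ∀ x ∈ T, ‖f x - a‖ₑ ≤ M) :
    ∀ᵐ x ∂μ.restrict T, ‖f x‖ₑ ≤ 2 * M := by
  have : IsFiniteMeasure (μ.restrict T) := ⟨by simpa using hT.measure_lt_top⟩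
  refine ae_enorm_le_of_integral_eq_zero (a := a)
    (memLp_one_iff_integrable.1 (memLp_restrict_of_continuous_of_isBounded hf hT 1)) hf₀ ?_
  have hclosed : IsClosed {x | ‖f x - a‖ₑ ≤ M} :=
    isClosed_le (hf.sub continuous_const).enorm continuous_const
  exact (ae_restrict_iff hclosed.measurableSet).2 (.of_forall hM)

theorem eLpNorm_restrict_eq_zero_of_subsingleton {X : Type*} [PseudoMetricSpace X]
    [ProperSpace X] [MeasurableSpace X] [OpensMeasurableSpace X] {μ : Measure X}
    [IsFiniteMeasureOnCompacts μ] {f : X → F} (hf : Continuous f) {T : Set X}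
    (hT : T.Subsingleton) (hf₀ : ∫ x in T, f x ∂μ = 0) (q : ℝ≥0∞) :
    eLpNorm f q (μ.restrict T) = 0 := by
  rcases T.eq_empty_or_nonempty with rfl | ⟨c, hc⟩
  · simp
  have hae := ae_restrict_enorm_le_of_setIntegral_eq_zero hf hT.finite.isBounded hf₀
    (a := f c) (M := 0) fun x hx => by simp [hT hx hc]
  rw [eLpNorm_congr_ae (hae.mono fun x hx => by simpa using hx : f =ᵐ[μ.restrict T] 0),
    eLpNorm_zero]

end Measure

section Dilation

variable {E F : Type*} [NormedAddCommGroup E] [NormedSpace ℝ E]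
  [NormedAddCommGroup F] [NormedSpace ℝ F]

theorem preimage_add_smul_ball (c : E) {h : ℝ} (hh : 0 < h) (r : ℝ) :
    (fun y => c + h • y) ⁻¹' ball c (r * h) = ball 0 r := by
  ext y
  simp [norm_smul, abs_of_pos hh, mul_comm h, hh]

theorem fderiv_comp_add_smul (f : E → F) (c : E) (h : ℝ) (y : E) :
    fderiv ℝ (fun y => f (c + h • y)) y = h • fderiv ℝ f (c + h • y) := by
  rw [fderiv_comp_smul (f := fun z => f (c + z)), fderiv_comp_add_left]

variable [MeasurableSpace E] [BorelSpace E]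

theorem measurableEmbedding_add_smul (c : E) {h : ℝ} (hh : h ≠ 0) :
    MeasurableEmbedding (fun y : E => c + h • y) :=
  (measurableEmbedding_addLeft c).comp (measurableEmbedding_const_smul₀ hh)

variable [FiniteDimensional ℝ E] (μ : Measure E) [μ.IsAddHaarMeasure]

theorem map_add_smul_restrict (c : E) {h : ℝ} (hh : h ≠ 0) (s : Set E) :
    (μ.restrict ((fun y => c + h • y) ⁻¹' s)).map (fun y => c + h • y) =
      (‖h‖ₑ ^ Module.finrank ℝ E)⁻¹ • μ.restrict s := by
  have hmap : μ.map (fun y => c + h • y) = (‖h‖ₑ ^ Module.finrank ℝ E)⁻¹ • μ := by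
    rw [← Function.comp_def (c + ·) (h • ·), ← Measure.map_map (by fun_prop) (by fun_prop),
      Measure.map_addHaar_smul μ hh, Measure.map_smul, map_add_left_eq_self,
      ← Real.enorm_eq_ofReal_abs, enorm_inv (pow_ne_zero _ hh), enorm_pow]
  rw [← (measurableEmbedding_add_smul c hh).restrict_map, hmap, Measure.restrict_smul]

theorem eLpNorm_comp_add_smul {G : Type*} [NormedAddCommGroup G] (f : E → G) (p : ℝ≥0∞)
    (c : E) {h : ℝ} (hh : h ≠ 0) (s : Set E) :
    eLpNorm (fun y => f (c + h • y)) p (μ.restrict ((fun y => c + h • y) ⁻¹' s)) =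
      ‖h‖ₑ ^ (-(Module.finrank ℝ E / p.toReal)) * eLpNorm f p (μ.restrict s) := by
  have hscale : (‖h‖ₑ ^ Module.finrank ℝ E)⁻¹ ≠ 0 := by simp
  calc eLpNorm (fun y => f (c + h • y)) p (μ.restrict ((fun y => c + h • y) ⁻¹' s))
      = eLpNorm f p ((‖h‖ₑ ^ Module.finrank ℝ E)⁻¹ • μ.restrict s) := by
        rw [← map_add_smul_restrict μ c hh,
          (measurableEmbedding_add_smul c hh).eLpNorm_map_measure]
        rfl
    _ = _ := by
        rw [eLpNorm_smul_measure_of_ne_zero hscale, smul_eq_mul, ← ENNReal.rpow_natCast,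
          ← ENNReal.rpow_neg, ← ENNReal.rpow_mul, one_div, ENNReal.toReal_inv, neg_mul,
          div_eq_mul_inv]

theorem eLpNorm_fderiv_comp_add_smul (f : E → F) (p : ℝ≥0∞) (c : E) {h : ℝ} (hh : h ≠ 0)
    (s : Set E) :
    eLpNorm (fderiv ℝ fun y => f (c + h • y)) p (μ.restrict ((fun y => c + h • y) ⁻¹' s)) =
      ‖h‖ₑ ^ (1 - Module.finrank ℝ E / p.toReal) * eLpNorm (fderiv ℝ f) p (μ.restrict s) := by
  have hderiv : (fderiv ℝ fun y => f (c + h • y)) = h • fun y => fderiv ℝ f (c + h • y) :=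
    funext (fderiv_comp_add_smul f c h)
  rw [hderiv, eLpNorm_const_smul (F := E →L[ℝ] F), eLpNorm_comp_add_smul μ _ p c hh, ← mul_assoc,
    sub_eq_add_neg, ENNReal.rpow_add _ _ (by simpa using hh) (by simp), ENNReal.rpow_one]

theorem eLpNorm_restrict_le_of_subset_closedBall {G : Type*} [NormedAddCommGroup G] {f : E → G}
    {q : ℝ≥0∞} (hq : q ≠ 0) {T : Set E} {c : E} {h : ℝ} (hh : 0 < h) (hT : T ⊆ closedBall c h)
    {M : ℝ≥0∞} (hM : ∀ᵐ x ∂μ.restrict T, ‖f x‖ₑ ≤ M) :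
    eLpNorm f q (μ.restrict T) ≤ M * (ENNReal.ofReal h ^ (Module.finrank ℝ E / q.toReal) *
      μ (closedBall 0 1) ^ (1 / q.toReal)) :=
  calc eLpNorm f q (μ.restrict T)
      ≤ eLpNorm (fun _ : E => M) q (μ.restrict T) := eLpNorm_mono_enorm_ae hM
    _ ≤ eLpNorm (fun _ : E => M) q (μ.restrict (closedBall c h)) :=
        eLpNorm_mono_measure _ (Measure.restrict_mono hT le_rfl)
    _ = M * μ (closedBall c h) ^ (1 / q.toReal) := by
        rw [eLpNorm_const _ hq, Measure.restrict_apply_univ, enorm_eq_self]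
        exact Measure.restrict_eq_zero.not.2 (measure_closedBall_pos μ c hh).ne'
    _ = _ := by
        rw [Measure.addHaar_closedBall' μ c hh.le, ENNReal.mul_rpow_of_nonneg _ _ (by positivity),
          ENNReal.ofReal_pow hh.le, ← ENNReal.rpow_natCast, ← ENNReal.rpow_mul, mul_one_div]

end Dilation

section AnalyticFunctions

variable {E F : Type*} [NormedAddCommGroup E] [NormedSpace ℝ E] [MeasurableSpace E]
  [NormedAddCommGroup F] [NormedSpace ℝ F]

/-- The derivative `f ↦ Df`, as a linear map from a space `V` of differentiable functions with
derivatives in `L^p(μ)` to `L^p(μ)`. -/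
def fderivToLp (V : Submodule ℝ (E → F)) (p : ℝ≥0∞) (μ : Measure E)
    (hV : ∀ f ∈ V, Differentiable ℝ f) (hLp : ∀ f ∈ V, MemLp (fderiv ℝ f) p μ) :
    V →ₗ[ℝ] Lp (E →L[ℝ] F) p μ where
  toFun f := (hLp f f.2).toLp
  map_add' f g := by
    rw [← MemLp.toLp_add]
    congr 1
    ext1 x
    exact fderiv_add (hV f f.2 x) (hV g g.2 x)
  map_smul' r f := by
    rw [RingHom.id_apply, ← MemLp.toLp_const_smul]
    congr 1
    ext1 x
    exact fderiv_const_smul (hV f f.2 x) r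

theorem fderivToLp_eq_zero_iff {V : Submodule ℝ (E → F)} {p : ℝ≥0∞} {μ : Measure E}
    {hV : ∀ f ∈ V, Differentiable ℝ f} {hLp : ∀ f ∈ V, MemLp (fderiv ℝ f) p μ} {f : V} :
    fderivToLp V p μ hV hLp f = 0 ↔ fderiv ℝ f.1 =ᵐ[μ] 0 := by
  have hcoe : fderivToLp V p μ hV hLp f =ᵐ[μ] fderiv ℝ f.1 := (hLp f f.2).coeFn_toLp
  rw [Lp.eq_zero_iff_ae_eq_zero]
  exact ⟨hcoe.symm.trans, hcoe.trans⟩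

/-- The deviation `f ↦ f - f a` from the value at `a`, as a linear map from a space `V` of
continuous functions to the continuous functions on `K`. -/
def deviationMap (V : Submodule ℝ (E → F)) (hV : ∀ f ∈ V, Continuous f) (K : Set E) (a : E) :
    V →ₗ[ℝ] C(K, F) where
  toFun f := ⟨fun y => f.1 y - f.1 a, ((hV f f.2).comp continuous_subtype_val).sub continuous_const⟩
  map_add' f g := by ext y; exact add_sub_add_comm ..
  map_smul' r f := by ext y; exact (smul_sub r (f.1 y) (f.1 a)).symm

variable [CompleteSpace F]

theorem eq_of_fderiv_ae_eq_zero [OpensMeasurableSpace E] {μ : Measure E} [μ.IsOpenPosMeasure]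
    {f : E → F} (hf : AnalyticOnNhd ℝ f univ) {U : Set E} (hU : IsOpen U) (hne : U.Nonempty)
    (hf' : fderiv ℝ f =ᵐ[μ.restrict U] 0) (x y : E) : f x = f y := by
  have hzero_on : EqOn (fderiv ℝ f) 0 U :=
    Measure.eqOn_open_of_ae_eq hf' hU (hf.fderiv.continuousOn.mono (subset_univ U))
      continuousOn_const
  obtain ⟨z, hz⟩ := hne
  have hzero : fderiv ℝ f = 0 :=
    hf.fderiv.eq_of_eventuallyEq analyticOnNhd_const
      (hzero_on.eventuallyEq_of_mem (hU.mem_nhds hz))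
  exact is_const_of_fderiv_eq_zero (fun x => (hf x (mem_univ x)).differentiableAt)
    (congrFun hzero) x y

variable [BorelSpace E] [FiniteDimensional ℝ E] (μ : Measure E)
  {V : Submodule ℝ (E → F)} [FiniteDimensional ℝ V] (hV : ∀ f ∈ V, AnalyticOnNhd ℝ f univ)
  {p : ℝ≥0∞}

include hV

theorem exists_enorm_sub_le_mul_eLpNorm_fderiv [IsFiniteMeasureOnCompacts μ] [μ.IsOpenPosMeasure]
    (hp : 1 ≤ p) {U : Set E} (hU : IsOpen U) (hne : U.Nonempty) (hUb : Bornology.IsBounded U)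
    {K : Set E} (hK : IsCompact K) (a : E) :
    ∃ C : ℝ≥0, ∀ f ∈ V, ∀ y ∈ K,
      ‖f y - f a‖ₑ ≤ C * eLpNorm (fderiv ℝ f) p (μ.restrict U) := by
  have : Fact (1 ≤ p) := ⟨hp⟩
  have : CompactSpace K := isCompact_iff_compactSpace.1 hK
  have : ProperSpace E := FiniteDimensional.proper_real E
  have hdiff (f) (hf : f ∈ V) : Differentiable ℝ f :=
    fun x => (hV f hf x (mem_univ x)).differentiableAt
  have hLp (f) (hf : f ∈ V) : MemLp (fderiv ℝ f) p (μ.restrict U) :=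
    memLp_restrict_of_continuous_of_isBounded (continuousOn_univ.1 (hV f hf).fderiv.continuousOn)
      hUb p
  let L := fderivToLp V p (μ.restrict U) hdiff hLp
  let A := deviationMap V (fun f hf => (hdiff f hf).continuous) K a
  have hker : LinearMap.ker L ≤ LinearMap.ker A := by
    intro f hf
    ext y
    exact sub_eq_zero.2 (eq_of_fderiv_ae_eq_zero (hV f f.2) hU hne
      (fderivToLp_eq_zero_iff.1 hf) y a)
  obtain ⟨C, hC⟩ := exists_enorm_le_mul_enorm_of_ker_le L A hker
  refine ⟨C, fun f hf y hy => ?_⟩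
  calc ‖f y - f a‖ₑ = ‖A ⟨f, hf⟩ ⟨y, hy⟩‖ₑ := rfl
    _ ≤ ‖A ⟨f, hf⟩‖ₑ := enorm_le_iff_norm_le.2 (ContinuousMap.norm_coe_le_norm _ _)
    _ ≤ C * ‖L ⟨f, hf⟩‖ₑ := hC ⟨f, hf⟩
    _ = C * eLpNorm (fderiv ℝ f) p (μ.restrict U) := by
      rw [show L ⟨f, hf⟩ = (hLp f hf).toLp from rfl, Lp.enorm_toLp]

variable [μ.IsAddHaarMeasure] (hV_affine : ∀ f ∈ V, ∀ c : E, ∀ h : ℝ, (fun y => f (c + h • y)) ∈ V)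
  {ρ : ℝ} (hρ : 0 < ρ) (hp : 1 ≤ p)

include hV_affine hρ hp

theorem exists_enorm_sub_le_rpow_mul_eLpNorm_fderiv_ball :
    ∃ C : ℝ≥0, ∀ f ∈ V, ∀ (c : E) (h : ℝ), 0 < h → ∀ x ∈ closedBall c h,
      ‖f x - f c‖ₑ ≤ C * (ENNReal.ofReal h ^ (1 - Module.finrank ℝ E / p.toReal) *
        eLpNorm (fderiv ℝ f) p (μ.restrict (ball c (ρ * h)))) := by
  obtain ⟨C, hC⟩ := exists_enorm_sub_le_mul_eLpNorm_fderiv μ hV hp isOpen_ball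
    (nonempty_ball.2 hρ) isBounded_ball (isCompact_closedBall (0 : E) 1) 0
  refine ⟨C, fun f hf c h hh x hx => ?_⟩
  have hmem : h⁻¹ • (x - c) ∈ closedBall (0 : E) 1 := by
    rw [mem_closedBall_zero_iff, norm_smul, norm_inv, Real.norm_of_nonneg hh.le,
      inv_mul_le_iff₀ hh, mul_one, ← dist_eq_norm]
    exact hx
  have hosc := hC _ (hV_affine f hf c h) _ hmem
  rw [← preimage_add_smul_ball c hh, eLpNorm_fderiv_comp_add_smul μ f p c hh.ne',
    Real.enorm_of_nonneg hh.le] at hosc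
  simpa [smul_smul, hh.ne'] using hosc

theorem exists_eLpNorm_le_rpow_mul_eLpNorm_fderiv {q : ℝ≥0∞} (hq : q ≠ 0) :
    ∃ C : ℝ≥0, ∀ (T : Set E) (c : E) (h : ℝ), 0 < h → ball c (ρ * h) ⊆ T → T ⊆ closedBall c h →
      ∀ f ∈ V, ∫ x in T, f x ∂μ = 0 → eLpNorm f q (μ.restrict T) ≤
        C * ENNReal.ofReal h ^ (1 + Module.finrank ℝ E / q.toReal
          - Module.finrank ℝ E / p.toReal) * eLpNorm (fderiv ℝ f) p (μ.restrict T) := by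
  obtain ⟨C, hC⟩ := exists_enorm_sub_le_rpow_mul_eLpNorm_fderiv_ball μ hV hV_affine hρ hp
  have : ProperSpace E := FiniteDimensional.proper_real E
  have hunit : μ (closedBall 0 1) ^ (1 / q.toReal) ≠ ∞ :=
    ENNReal.rpow_ne_top_of_nonneg (by positivity) measure_closedBall_lt_top.ne
  refine ⟨2 * C * (μ (closedBall 0 1) ^ (1 / q.toReal)).toNNReal, ?_⟩
  intro T c h hh hball hsub f hf hmean
  have hcont : Continuous f := continuousOn_univ.1 (hV f hf).continuousOn
  let N := eLpNorm (fderiv ℝ f) p (μ.restrict T)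
  let M := C * (ENNReal.ofReal h ^ (1 - Module.finrank ℝ E / p.toReal) * N)
  have hosc (x) (hx : x ∈ T) : ‖f x - f c‖ₑ ≤ M := by
    refine (hC f hf c h hh x (hsub hx)).trans ?_
    change _ ≤ C * (ENNReal.ofReal h ^ (1 - Module.finrank ℝ E / p.toReal) * N)
    gcongr
    exact eLpNorm_mono_measure _ (Measure.restrict_mono hball le_rfl)
  calc eLpNorm f q (μ.restrict T)
      ≤ 2 * M * (ENNReal.ofReal h ^ (Module.finrank ℝ E / q.toReal) *
          μ (closedBall 0 1) ^ (1 / q.toReal)) :=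
        eLpNorm_restrict_le_of_subset_closedBall μ hq hh hsub
          (ae_restrict_enorm_le_of_setIntegral_eq_zero hcont (isBounded_closedBall.subset hsub)
            hmean hosc)
    _ = _ := by
        rw [add_sub_right_comm, ENNReal.rpow_add _ _ (by simpa using hh) (by simp),
          ENNReal.coe_mul, ENNReal.coe_toNNReal hunit, ENNReal.coe_mul, ENNReal.coe_ofNat]
        ring

end AnalyticFunctions

section Polynomials

open MvPolynomial

theorem totalDegree_bind₁_le {σ τ R : Type*} [CommSemiring R] {f : σ → MvPolynomial τ R} {n : ℕ}
    (hf : ∀ i, (f i).totalDegree ≤ n) (P : MvPolynomial σ R) :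
    (bind₁ f P).totalDegree ≤ P.totalDegree * n := by
  rw [bind₁, aeval_def, eval₂_eq]
  refine totalDegree_finsetSum_le fun s hs => ?_
  calc (algebraMap R (MvPolynomial τ R) (P.coeff s) * ∏ i ∈ s.support, f i ^ s i).totalDegree
      ≤ (C (P.coeff s) : MvPolynomial τ R).totalDegree +
          (∏ i ∈ s.support, f i ^ s i).totalDegree := totalDegree_mul _ _
    _ ≤ ∑ i ∈ s.support, (f i ^ s i).totalDegree := by
        rw [totalDegree_C, zero_add]
        exact totalDegree_finsetProd _ _
    _ ≤ ∑ i ∈ s.support, s i * n := Finset.sum_le_sum fun i _ =>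
        (totalDegree_pow _ _).trans (Nat.mul_le_mul_left _ (hf i))
    _ = s.degree * n := (Finset.sum_mul ..).symm
    _ ≤ P.totalDegree * n := Nat.mul_le_mul_right _ (le_totalDegree hs)

variable {d k : ℕ} {w : EuclideanSpace ℝ (Fin d) → ℝ}

theorem IsPolyDegLE.analyticOnNhd (hw : IsPolyDegLE d k w) : AnalyticOnNhd ℝ w univ := by
  obtain ⟨P, -, hP⟩ := hw
  obtain rfl : w = fun x : EuclideanSpace ℝ (Fin d) => aeval (fun i => x i) P := funext hP
  exact fun x _ => AnalyticAt.aeval_mvPolynomial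
    (fun i => (EuclideanSpace.proj i : EuclideanSpace ℝ (Fin d) →L[ℝ] ℝ).analyticAt x) P

theorem IsPolyDegLE.continuous (hw : IsPolyDegLE d k w) : Continuous w :=
  continuousOn_univ.1 hw.analyticOnNhd.continuousOn

theorem IsPolyDegLE.comp_add_smul (hw : IsPolyDegLE d k w) (c : EuclideanSpace ℝ (Fin d)) (h : ℝ) :
    IsPolyDegLE d k fun y => w (c + h • y) := by
  obtain ⟨P, hPk, hP⟩ := hw
  let f (i : Fin d) : MvPolynomial (Fin d) ℝ := C (c i) + C h * X i
  have hf (i : Fin d) : (f i).totalDegree ≤ 1 :=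
    (totalDegree_add _ _).trans
      (max_le (by simp) ((totalDegree_mul _ _).trans (by simp)))
  refine ⟨bind₁ f P, (totalDegree_bind₁_le hf P).trans (by simpa using hPk), fun y => ?_⟩
  have heval : eval (fun i => y i) (bind₁ f P) = eval (fun i => eval (fun i => y i) (f i)) P :=
    eval₂Hom_bind₁ ..
  simp [hP, heval, f]

/-- The space of functions satisfying `IsPolyDegLE d k`, realised as the image of
`MvPolynomial.restrictTotalDegree` so that it is visibly finite-dimensional. -/
def polyDegLE (d k : ℕ) : Submodule ℝ (EuclideanSpace ℝ (Fin d) → ℝ) :=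
  (restrictTotalDegree (Fin d) ℝ k).map
    (LinearMap.funLeft ℝ ℝ WithLp.ofLp ∘ₗ evalₗ ℝ (Fin d))

theorem mem_polyDegLE : w ∈ polyDegLE d k ↔ IsPolyDegLE d k w := by
  simp only [polyDegLE, Submodule.mem_map, mem_restrictTotalDegree, IsPolyDegLE]
  exact exists_congr fun P => and_congr_right fun _ =>
    ⟨fun h => congrFun h.symm, fun h => (funext h).symm⟩

instance : FiniteDimensional ℝ (polyDegLE d k) :=
  inferInstanceAs (Module.Finite ℝ (Submodule.map _ _))

end Polynomials

theorem eLpNorm_gradient {E : Type*} [NormedAddCommGroup E] [InnerProductSpace ℝ E]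
    [CompleteSpace E] [MeasurableSpace E] (f : E → ℝ) (p : ℝ≥0∞) (μ : Measure E) :
    eLpNorm (gradient f) p μ = eLpNorm (fderiv ℝ f) p μ :=
  eLpNorm_congr_norm_ae (.of_forall fun _ => LinearIsometryEquiv.norm_map _ _)

-- At an infinite exponent `d / ∞.toReal = d / 0 = 0`, which is the intended power.
theorem poincare_wirtinger_sobolev_poly_general (d k : ℕ) {ρ : ℝ} (hρ : 0 < ρ) {p q : ℝ≥0∞}
    (hp : 1 ≤ p) (hq : q ≠ 0) :
    ∃ C : ℝ, 0 < C ∧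
      ∀ (T : Set (EuclideanSpace ℝ (Fin d))) (c : EuclideanSpace ℝ (Fin d)),
        Bornology.IsBounded T → ball c (ρ * diam T) ⊆ T →
        ∀ w : EuclideanSpace ℝ (Fin d) → ℝ, IsPolyDegLE d k w →
          (∫ x in T, w x) = 0 →
          eLpNorm w q (volume.restrict T)
            ≤ ENNReal.ofReal (C * diam T ^ (1 + (d : ℝ) / q.toReal - (d : ℝ) / p.toReal)) *
              eLpNorm (gradient w) p (volume.restrict T) := by
  obtain ⟨C, hC⟩ := exists_eLpNorm_le_rpow_mul_eLpNorm_fderiv volume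
    (fun f hf => (mem_polyDegLE (k := k).1 hf).analyticOnNhd)
    (fun f hf c h => mem_polyDegLE.2 ((mem_polyDegLE.1 hf).comp_add_smul c h)) hρ hp hq
  refine ⟨C + 1, by positivity, fun T c hT hball w hw hmean => ?_⟩
  have hdist (x) (hx : x ∈ T) (y) (hy : y ∈ T) : dist x y ≤ diam T := dist_le_diam_of_mem hT hx hy
  rcases (diam_nonneg (s := T)).eq_or_lt with hzero | hpos
  · have hsub : T.Subsingleton := fun x hx y hy => dist_le_zero.1 (hzero ▸ hdist x hx y hy)
    rw [eLpNorm_restrict_eq_zero_of_subsingleton hw.continuous hsub hmean]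
    exact zero_le
  have hc : c ∈ T := hball (mem_ball_self (by positivity))
  calc eLpNorm w q (volume.restrict T)
      ≤ C * ENNReal.ofReal (diam T) ^ (1 + d / q.toReal - d / p.toReal) *
          eLpNorm (fderiv ℝ w) p (volume.restrict T) := by
        simpa using hC T c (diam T) hpos hball (fun x hx => hdist x hx c hc) w
          (mem_polyDegLE.2 hw) hmean
    _ = ENNReal.ofReal (C * diam T ^ (1 + d / q.toReal - d / p.toReal)) *
          eLpNorm (gradient w) p (volume.restrict T) := by
        rw [ENNReal.ofReal_rpow_of_pos hpos, ENNReal.ofReal_mul C.coe_nonneg,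
          ENNReal.ofReal_coe_nnreal, eLpNorm_gradient]
    _ ≤ ENNReal.ofReal ((C + 1) * diam T ^ (1 + d / q.toReal - d / p.toReal)) *
          eLpNorm (gradient w) p (volume.restrict T) := by
        gcongr
        exact le_add_of_nonneg_right zero_le_one

/-- Poincaré–Wirtinger–Sobolev inequality for polynomials with zero average:
`‖w‖_{L^q(T)} ≤ C h_T^{1 + d/q - d/p} ‖∇w‖_{L^p(T)}`. -/
theorem poincare_wirtinger_sobolev_poly
    (d k : ℕ) (hd : 1 ≤ d) (ρ : ℝ) (hρ : 0 < ρ) (p q : ℝ)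
    (hp : 1 ≤ p) (hpq : p ≤ q) (hsob : 1 / p - 1 / (d : ℝ) ≤ 1 / q) :
    ∃ C : ℝ, 0 < C ∧
      ∀ T : Set (EuclideanSpace ℝ (Fin d)),
        IsOpen T → Bornology.IsBounded T → StarShapedWrtBall ρ T →
        ∀ w : EuclideanSpace ℝ (Fin d) → ℝ, IsPolyDegLE d k w →
          (∫ x in T, w x) = 0 →
          eLpNorm w (ENNReal.ofReal q) (volume.restrict T)
            ≤ ENNReal.ofReal (C * Metric.diam T ^ (1 + (d : ℝ) / q - (d : ℝ) / p)) *
              eLpNorm (fun x => gradient w x) (ENNReal.ofReal p) (volume.restrict T) := by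
  obtain ⟨C, hC, hbound⟩ := poincare_wirtinger_sobolev_poly_general d k hρ
    (ENNReal.one_le_ofReal.2 hp) (ENNReal.ofReal_pos.2 (by linarith : 0 < q)).ne'
  refine ⟨C, hC, fun T _ hT ⟨c, hball, _⟩ w hw hmean => ?_⟩
  rw [ENNReal.toReal_ofReal (by linarith), ENNReal.toReal_ofReal (by linarith)] at hbound
  exact hbound T c hT hball w hw hmean
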